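/- arXiv:1503.08082 — 2 statements merged into one kernel-verified Lean document; each statement's English description precedes it below -/
import Mathlib

section
/- Fix t > 0, ξ > 0, y₀ > 0, p > 1 and k > 0, and set η := 1/(2(p-1)). Let C(k,τ) be the call price in the CEV-variance model with exponent p, and suppose σ : (0, τ₀) → (0,∞) satisfies BS(k, σ(τ)², τ) = C(k,τ) for all τ ∈ (0,τ₀) (the implied volatility). Then lim_{τ→0⁺} σ(τ)²·2(2p-1)·τ·|log τ| / k² = 1; that is, σ(τ)² ∼ k²/(2(2p-1)·τ·|log τ|) as τ → 0⁺. -/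
/-- The standard normal cumulative distribution function. -/
noncomputable def Phi (x : ℝ) : ℝ :=
  ∫ s in Set.Iic x, Real.exp (-(s ^ 2) / 2) / Real.sqrt (2 * Real.pi)

/-- The Black–Scholes call price. -/
noncomputable def BS (k w T : ℝ) : ℝ :=
  Phi (-k / Real.sqrt (w * T) + Real.sqrt (w * T) / 2)
    - Real.exp k * Phi (-k / Real.sqrt (w * T) - Real.sqrt (w * T) / 2)

/-- The modified Bessel function of the first kind of order `ν`. -/
noncomputable def besselI (ν x : ℝ) : ℝ :=
  ∑' m : ℕ, (x / 2) ^ (2 * (m : ℝ) + ν) / ((m.factorial : ℝ) * Real.Gamma ((m : ℝ) + ν + 1))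

noncomputable def gs (s : ℝ) : ℝ := Real.exp (-(s ^ 2) / 2) / Real.sqrt (2 * Real.pi)

lemma gs_pos (s : ℝ) : 0 < gs s := by
  unfold gs; positivity

lemma gs_int : MeasureTheory.Integrable gs := by
  have h := (integrable_exp_neg_mul_sq (b := 1/2) (by norm_num)).div_const (Real.sqrt (2 * Real.pi))
  refine h.congr (Filter.Eventually.of_forall fun x => ?_)
  simp only [gs]
  congr 2
  ring

lemma gs_total : ∫ s, gs s = 1 := by
  have h := integral_gaussian (1/2)
  have : ∀ s, gs s = Real.exp (-(1/2) * s^2) / Real.sqrt (2 * Real.pi) := by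
    intro s; simp only [gs]; congr 2; ring
  simp_rw [this]
  rw [MeasureTheory.integral_div, h]
  have : Real.pi / (1/2) = 2 * Real.pi := by ring
  rw [this]
  exact div_self (by positivity)

lemma Phi_eq (x : ℝ) : Phi x = ∫ s in Set.Iic x, gs s := rfl

lemma Phi_nonneg (x : ℝ) : 0 ≤ Phi x :=
  MeasureTheory.integral_nonneg fun s => (gs_pos s).le

lemma Phi_mono : Monotone Phi := by
  intro a b hab
  rw [Phi_eq, Phi_eq]
  exact MeasureTheory.setIntegral_mono_set gs_int.integrableOn
    (Filter.Eventually.of_forall fun s => (gs_pos s).le)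
    (Filter.Eventually.of_forall (Set.Iic_subset_Iic.2 hab))

lemma Phi_le_one (x : ℝ) : Phi x ≤ 1 := by
  rw [Phi_eq, ← gs_total]
  exact MeasureTheory.setIntegral_le_integral gs_int
    (Filter.Eventually.of_forall fun s => (gs_pos s).le)

lemma Phi_shift (x s : ℝ) : Phi (x - s) = ∫ z in Set.Iic x, gs (z - s) := by
  have h := (MeasureTheory.measurePreserving_sub_right MeasureTheory.volume s).setIntegral_preimage_emb
    (measurableEmbedding_subRight s) gs (Set.Iic (x - s))
  rw [Phi_eq, ← h]
  congr 2
  ext z; simp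

lemma Phi_upper (d : ℝ) (hd : 0 ≤ d) : Phi (-d) ≤ Real.exp (-(d^2)/2) := by
  have h : Phi (-d) ≤ ∫ z in Set.Iic (-d), Real.exp (-(d^2)/2) * gs (z - (-d)) := by
    rw [Phi_eq]
    refine MeasureTheory.setIntegral_mono_on gs_int.integrableOn
      ((gs_int.comp_sub_right (-d)).const_mul _).integrableOn measurableSet_Iic ?_
    intro z hz
    have hz' : z ≤ -d := hz
    simp only [gs]
    rw [← mul_div_assoc, ← Real.exp_add]
    gcongr
    nlinarith
  rw [MeasureTheory.integral_const_mul, ← Phi_shift] at h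
  have := Phi_le_one (-d - -d)
  have h3 := Real.exp_pos (-(d^2)/2)
  nlinarith

lemma Phi_lower (x : ℝ) (hx : 0 ≤ x) : gs (x + 1) ≤ Phi (-x) := by
  have h1 : ∫ z in Set.Icc (-x-1) (-x), gs (x+1) ≤ ∫ z in Set.Icc (-x-1) (-x), gs z := by
    refine MeasureTheory.setIntegral_mono_on (by simp) gs_int.integrableOn measurableSet_Icc ?_
    intro z hz
    simp only [gs]
    gcongr ?_ / _
    apply Real.exp_le_exp.2
    have := hz.1
    have := hz.2
    nlinarith
  have h2 : ∫ z in Set.Icc (-x-1) (-x), gs z ≤ Phi (-x) := by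
    rw [Phi_eq]
    exact MeasureTheory.setIntegral_mono_set gs_int.integrableOn
      (Filter.Eventually.of_forall fun s => (gs_pos s).le)
      (Filter.Eventually.of_forall Set.Icc_subset_Iic_self)
  refine le_trans (le_of_eq ?_) (h1.trans h2)
  simp

/-- quantitative lower bound -/
lemma Phi_lower' (ε : ℝ) (hε : 0 < ε) : ∃ c > 0, ∀ x, 0 ≤ x →
    c * Real.exp (-((1+ε) * x^2/2)) ≤ Phi (-x) := by
  refine ⟨Real.exp (-(1 + 1/ε)/2) / Real.sqrt (2 * Real.pi), by positivity, fun x hx => ?_⟩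
  refine le_trans ?_ (Phi_lower x hx)
  simp only [gs]
  rw [div_mul_eq_mul_div, ← Real.exp_add]
  gcongr
  have : 0 ≤ ε * (x - 1/ε)^2 := by positivity
  have e : ε * (x - 1/ε)^2 = ε * x^2 - 2 * x + 1/ε := by field_simp; ring
  nlinarith

lemma Phi_diff (k s x θ : ℝ) (hs : 0 < s) (hθ : 0 ≤ θ) (hx : s * x = -k + s^2/2) :
    (1 - Real.exp (-(s*θ))) * Phi (x - θ) ≤ Phi x - Real.exp k * Phi (x - s) := by
  have e : ∀ z, Real.exp k * gs (z - s) = gs z * Real.exp (s * (z - x)) := by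
    intro z
    simp only [gs]
    rw [← mul_div_assoc, div_mul_eq_mul_div, ← Real.exp_add, ← Real.exp_add]
    congr 2
    linear_combination hx
  have hi : MeasureTheory.Integrable (fun z => gs z - Real.exp k * gs (z - s)) :=
    gs_int.sub ((gs_int.comp_sub_right s).const_mul _)
  have e2 : Phi x - Real.exp k * Phi (x - s) =
      ∫ z in Set.Iic x, (gs z - Real.exp k * gs (z - s)) := by
    rw [Phi_shift, Phi_eq, ← MeasureTheory.integral_const_mul, ← MeasureTheory.integral_sub]
    · exact gs_int.integrableOn
    · exact ((gs_int.comp_sub_right s).const_mul _).integrableOn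
  have h1 : ∫ z in Set.Iic (x-θ), (gs z - Real.exp k * gs (z - s)) ≤
      ∫ z in Set.Iic x, (gs z - Real.exp k * gs (z - s)) := by
    refine MeasureTheory.setIntegral_mono_set hi.integrableOn ?_
      (Filter.Eventually.of_forall (Set.Iic_subset_Iic.2 (by linarith)))
    refine (MeasureTheory.ae_restrict_iff' measurableSet_Iic).2 (Filter.Eventually.of_forall ?_)
    intro z hz
    have hz' : z ≤ x := hz
    simp only [Pi.zero_apply]
    rw [e]
    have : Real.exp (s * (z - x)) ≤ 1 := Real.exp_le_one_iff.2 (by nlinarith)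
    nlinarith [gs_pos z]
  have h2 : (1 - Real.exp (-(s*θ))) * Phi (x - θ) ≤
      ∫ z in Set.Iic (x-θ), (gs z - Real.exp k * gs (z - s)) := by
    rw [Phi_eq, ← MeasureTheory.integral_const_mul]
    refine MeasureTheory.setIntegral_mono_on (gs_int.const_mul _).integrableOn hi.integrableOn
      measurableSet_Iic ?_
    intro z hz
    have hz' : z ≤ x - θ := hz
    rw [e]
    have : Real.exp (s * (z - x)) ≤ Real.exp (-(s*θ)) := Real.exp_le_exp.2 (by nlinarith)
    nlinarith [gs_pos z]
  rw [e2]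
  exact h2.trans h1

lemma BS_upper (k w T : ℝ) (hk : 0 < k) (hw : 0 < w) (hT : 0 < T) :
    BS k w T ≤ Real.exp (k/2) * Real.exp (-(k^2/(2*(w*T)))) := by
  have hv : 0 < w * T := by positivity
  set s := Real.sqrt (w*T) with hs
  have hs0 : 0 < s := Real.sqrt_pos.2 hv
  have hsq : s^2 = w*T := Real.sq_sqrt hv.le
  rw [← hsq, ← Real.exp_add]
  have h1 : BS k w T ≤ Phi (-k / s + s/2) := by
    unfold BS
    have := mul_nonneg (Real.exp_pos k).le (Phi_nonneg (-k / s - s/2))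
    linarith
  refine h1.trans ?_
  by_cases hc : s^2 ≤ 2*k
  · have := Phi_upper (k/s - s/2) (by
      rw [sub_nonneg, div_le_div_iff₀ (by norm_num) hs0]; nlinarith)
    have e1 : -(k/s - s/2) = -k/s + s/2 := by ring
    rw [e1] at this
    refine this.trans (Real.exp_le_exp.2 ?_)
    have e2 : (k/s - s/2)^2 = k^2/s^2 - k + s^2/4 := by field_simp; ring
    have e3 : k^2/(2*s^2) = (k^2/s^2)/2 := by ring
    rw [e2, e3]
    nlinarith [sq_nonneg s]
  · push Not at hc
    refine (Phi_le_one _).trans (Real.one_le_exp ?_)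
    have : k^2/(2*s^2) ≤ k/2 := by
      rw [div_le_div_iff₀ (by positivity) (by norm_num)]; nlinarith
    linarith

lemma BS_lower (k : ℝ) (hk : 0 < k) (ε : ℝ) (hε : 0 < ε) : ∃ c > 0, ∀ w T, 0 < w → 0 < T →
    c * Real.exp (-((1+ε)^3 * k^2/(2*(w*T)))) ≤ BS k w T := by
  obtain ⟨c, hc, h⟩ := Phi_lower' ε hε
  have hek : 0 < 1 - Real.exp (-(ε*k)) := by
    have : Real.exp (-(ε*k)) < 1 := by
      rw [← Real.exp_zero]; apply Real.exp_lt_exp.2; nlinarith [mul_pos hε hk]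
    linarith
  refine ⟨(1 - Real.exp (-(ε*k))) * c, by positivity, fun w T hw hT => ?_⟩
  have hv : 0 < w * T := by positivity
  set s := Real.sqrt (w*T) with hs
  have hs0 : 0 < s := Real.sqrt_pos.2 hv
  have hsq : s^2 = w*T := Real.sq_sqrt hv.le
  have h1 := Phi_diff k s (-k/s + s/2) (ε*k/s) hs0 (by positivity) (by field_simp)
  have e1 : s * (ε*k/s) = ε*k := by field_simp
  have e2 : -k/s + s/2 - s = -k/s - s/2 := by ring
  rw [e1, e2] at h1
  have h2 : BS k w T = Phi (-k / s + s/2) - Real.exp k * Phi (-k/s - s/2) := rfl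
  rw [h2]
  refine le_trans ?_ h1
  rw [mul_assoc]
  refine mul_le_mul_of_nonneg_left ?_ hek.le
  have h3 := h ((1+ε)*k/s) (by positivity)
  have e3 : -((1+ε)*k/s) ≤ -k/s + s/2 - ε*k/s := by
    have : -((1+ε)*k/s) = -k/s - ε*k/s := by ring
    linarith
  refine le_trans (le_of_eq ?_) (h3.trans (Phi_mono e3))
  rw [← hsq]
  congr 3
  field_simp

lemma BS_nonneg (k w T : ℝ) (hk : 0 < k) (hw : 0 < w) (hT : 0 < T) : 0 ≤ BS k w T := by
  obtain ⟨c, hc, h⟩ := BS_lower k hk 1 one_pos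
  exact le_trans (by positivity) (h w T hw hT)

lemma BS_meas (k T : ℝ) : Measurable (fun w => BS k w T) := by
  have := Phi_mono.measurable
  unfold BS
  fun_prop

lemma gamma_ge (ν : ℝ) (hν : 0 < ν) (m : ℕ) :
    (m.factorial : ℝ) * Real.Gamma (ν + 1) ≤ Real.Gamma ((m:ℝ) + ν + 1) := by
  induction m with
  | zero => simp
  | succ n ih =>
    have e : ((n+1 : ℕ):ℝ) + ν + 1 = ((n:ℝ) + ν + 1) + 1 := by push_cast; ring
    have hp : 0 < Real.Gamma (ν+1) := Real.Gamma_pos_of_pos (by linarith)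
    rw [e, Real.Gamma_add_one (s := (n:ℝ)+ν+1) (by positivity), Nat.factorial_succ]
    push_cast
    have : 0 ≤ (n.factorial : ℝ) * Real.Gamma (ν + 1) := by positivity
    rw [mul_assoc]
    apply mul_le_mul _ ih this (by positivity)
    linarith

noncomputable def bt (ν x : ℝ) (m : ℕ) : ℝ :=
  (x / 2) ^ (2 * (m : ℝ) + ν) / ((m.factorial : ℝ) * Real.Gamma ((m : ℝ) + ν + 1))

lemma bt_nonneg (ν x : ℝ) (hν : 0 < ν) (hx : 0 < x) (m : ℕ) : 0 ≤ bt ν x m := by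
  unfold bt
  have : 0 < Real.Gamma ((m : ℝ) + ν + 1) := Real.Gamma_pos_of_pos (by positivity)
  positivity

lemma bt_le (ν x : ℝ) (hν : 0 < ν) (hx : 0 < x) (m : ℕ) :
    bt ν x m ≤ ((x/2)^ν / Real.Gamma (ν+1) * Real.exp (x/2)) * ((x/2)^m / (m.factorial : ℝ)) := by
  have hp : 0 < Real.Gamma (ν+1) := Real.Gamma_pos_of_pos (by linarith)
  have hm : (0:ℝ) < m.factorial := by exact_mod_cast Nat.factorial_pos m
  have h1 : bt ν x m ≤ (x/2)^(2*(m:ℝ)+ν) / ((m.factorial : ℝ) * ((m.factorial : ℝ) * Real.Gamma (ν + 1))) := by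
    unfold bt
    gcongr
    exact gamma_ge ν hν m
  refine h1.trans ?_
  have e : (x/2)^(2*(m:ℝ)+ν) = (x/2)^m * (x/2)^m * (x/2)^ν := by
    rw [Real.rpow_add (by positivity), two_mul, Real.rpow_add (by positivity), Real.rpow_natCast]
  have h2 : (x/2)^m / (m.factorial:ℝ) ≤ Real.exp (x/2) := Real.pow_div_factorial_le_exp _ (by positivity) m
  have e2 : (x/2)^(2*(m:ℝ)+ν) / ((m.factorial : ℝ) * ((m.factorial : ℝ) * Real.Gamma (ν + 1)))
     = ((x/2)^ν / Real.Gamma (ν+1) * ((x/2)^m / (m.factorial : ℝ))) * ((x/2)^m / (m.factorial : ℝ)) := by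
    rw [e]; field_simp
  rw [e2]
  gcongr

lemma expsum (x : ℝ) : HasSum (fun m : ℕ => x^m / (m.factorial : ℝ)) (Real.exp x) := by
  rw [Real.exp_eq_exp_ℝ]
  exact NormedSpace.expSeries_div_hasSum_exp x

lemma bt_summable (ν x : ℝ) (hν : 0 < ν) (hx : 0 < x) : Summable (bt ν x) :=
  Summable.of_nonneg_of_le (bt_nonneg ν x hν hx) (bt_le ν x hν hx)
    ((expsum (x/2)).summable.mul_left _)

lemma bessel_eq (ν x : ℝ) : besselI ν x = ∑' m, bt ν x m := rfl

lemma bessel_upper (ν x : ℝ) (hν : 0 < ν) (hx : 0 < x) :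
    besselI ν x ≤ (x/2)^ν / Real.Gamma (ν+1) * Real.exp x := by
  rw [bessel_eq]
  have h := (bt_summable ν x hν hx).tsum_le_tsum (bt_le ν x hν hx) ((expsum (x/2)).summable.mul_left _)
  refine h.trans (le_of_eq ?_)
  rw [tsum_mul_left, (expsum (x/2)).tsum_eq, mul_assoc, ← Real.exp_add]
  congr 2; ring

lemma bessel_lower (ν x : ℝ) (hν : 0 < ν) (hx : 0 < x) :
    (x/2)^ν / Real.Gamma (ν+1) ≤ besselI ν x := by
  rw [bessel_eq]
  have h := (bt_summable ν x hν hx).le_tsum 0 (fun j _ => bt_nonneg ν x hν hx j)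
  simpa [bt] using h

lemma bessel_meas (ν : ℝ) (hν : 0 < ν) (f : ℝ → ℝ) (hf : Measurable f)
    (hpos : ∀ z, 0 < z → 0 < f z) :
    AEMeasurable (fun z => besselI ν (f z)) (MeasureTheory.volume.restrict (Set.Ioi 0)) := by
  refine aemeasurable_of_tendsto_metrizable_ae Filter.atTop
    (f := fun (n : ℕ) z => ∑ m ∈ Finset.range n, bt ν (f z) m) ?_ ?_
  · intro n
    apply Measurable.aemeasurable
    unfold bt
    fun_prop
  · refine (MeasureTheory.ae_restrict_iff' measurableSet_Ioi).2 (Filter.Eventually.of_forall ?_)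
    intro z hz
    exact (bt_summable ν _ hν (hpos z hz)).hasSum.tendsto_sum_nat

lemma int_pow (q a : ℝ) (hq : 0 < q) (ha : 1 < a) :
    MeasureTheory.IntegrableOn (fun u : ℝ => Real.exp (-(q/u)) * u^(-a)) (Set.Ioi 0) := by
  have h := integrableOn_rpow_mul_exp_neg_mul_rpow (p := 1) (s := a-2) (b := q) (by linarith)
    one_pos hq
  have h2 := (MeasureTheory.integrableOn_Ioi_comp_rpow_iff' (fun x : ℝ => x ^ (a-2) * Real.exp (-q * x ^ (1:ℝ))) (p := -1) (by norm_num)).2 h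
  refine h2.congr_fun ?_ measurableSet_Ioi
  intro u hu
  have hu : 0 < u := hu
  simp only [smul_eq_mul, Real.rpow_one]
  rw [← Real.rpow_mul hu.le, ← mul_assoc, ← Real.rpow_add hu, Real.rpow_neg_one, mul_comm]
  congr 2
  · rw [div_eq_mul_inv, neg_mul]
  · ring

noncomputable def zeta (t ξ y0 p z : ℝ) : ℝ :=
  Real.sqrt y0 * z ^ ((1 : ℝ) / 2 - 2 * p) / ((p - 1) * ξ ^ 2 * t)
        * Real.exp (-(z ^ (2 * (1 - p)) + y0 ^ (2 * (1 - p))) / (2 * ξ ^ 2 * t * (1 - p) ^ 2))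
        * besselI (1 / (2 * (p - 1))) ((y0 * z) ^ (1 - p) / ((1 - p) ^ 2 * ξ ^ 2 * t))

lemma zeta_bounds (t ξ y0 p : ℝ) (ht : 0 < t) (hξ : 0 < ξ) (hy0 : 0 < y0) (hp : 1 < p) :
    ∃ K > 0, ∃ c > 0, ∀ z, 0 < z → 0 ≤ zeta t ξ y0 p z ∧ zeta t ξ y0 p z ≤ K * z ^ (-(2*p)) ∧
      (1 ≤ z → c * z ^ (-(2*p)) ≤ zeta t ξ y0 p z) := by
  have hp1 : 0 < p - 1 := by linarith
  have hp2 : 1 - p ≠ 0 := by linarith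
  set η : ℝ := 1 / (2 * (p - 1)) with hη
  have hη0 : 0 < η := by positivity
  have hG : 0 < Real.Gamma (η + 1) := Real.Gamma_pos_of_pos (by positivity)
  set s : ℝ := (1 - p) ^ 2 * ξ ^ 2 * t with hs
  have hs0 : 0 < s := by positivity
  set X0 : ℝ := y0 ^ (1-p) with hX0
  have hX00 : 0 < X0 := by positivity
  set A : ℝ := Real.sqrt y0 / ((p - 1) * ξ ^ 2 * t) with hA
  have hA0 : 0 < A := by positivity
  set D : ℝ := A * (X0 / (2*s)) ^ η / Real.Gamma (η + 1) with hD
  have hD0 : 0 < D := by positivity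
  refine ⟨D, hD0, D * Real.exp (-(1 + X0^2) / (2*s)), by positivity, fun z hz => ?_⟩
  set X : ℝ := z ^ (1-p) with hX
  have hX0' : 0 < X := by positivity
  set x : ℝ := X0 * X / s with hx
  have hx0 : 0 < x := by positivity
  have e1 : zeta t ξ y0 p z = A * z ^ ((1:ℝ)/2 - 2*p) * Real.exp (-(X^2 + X0^2) / (2*s)) * besselI η x := by
    unfold zeta
    have a1 : z ^ (2 * (1-p)) = X^2 := by
      rw [mul_comm, Real.rpow_mul hz.le]; norm_cast
    have a2 : y0 ^ (2 * (1-p)) = X0^2 := by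
      rw [mul_comm, Real.rpow_mul hy0.le]; norm_cast
    rw [a1, a2, Real.mul_rpow hy0.le hz.le]
    have a3 : 2 * ξ ^ 2 * t * (1 - p) ^ 2 = 2 * s := by rw [hs]; ring
    rw [a3, hA]
    congr 2
    ring
  have e2 : A * z ^ ((1:ℝ)/2 - 2*p) * ((x/2)^η / Real.Gamma (η+1)) = D * z ^ (-(2*p)) := by
    have b1 : x/2 = X0/(2*s) * X := by rw [hx]; field_simp
    have b2 : X ^ η = z ^ (-(1/2) : ℝ) := by
      rw [hX, ← Real.rpow_mul hz.le]
      congr 1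
      rw [hη]; field_simp; ring
    have b3 : z ^ (-(2*p)) = z ^ ((1:ℝ)/2 - 2*p) * z ^ (-(1/2) : ℝ) := by
      rw [← Real.rpow_add hz]; congr 1; ring
    rw [b1, Real.mul_rpow (by positivity) hX0'.le, b2, b3, hD]
    ring
  have hu := bessel_upper η x hη0 hx0
  have hl := bessel_lower η x hη0 hx0
  have hI : 0 ≤ besselI η x := le_trans (by positivity) hl
  rw [e1]
  refine ⟨by positivity, ?_, fun hz1 => ?_⟩
  · calc A * z ^ ((1:ℝ)/2 - 2*p) * Real.exp (-(X^2 + X0^2) / (2*s)) * besselI η x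
        ≤ A * z ^ ((1:ℝ)/2 - 2*p) * Real.exp (-(X^2 + X0^2) / (2*s)) *
          ((x/2)^η / Real.Gamma (η+1) * Real.exp x) := by gcongr
      _ = D * z ^ (-(2*p)) * (Real.exp (-(X^2 + X0^2) / (2*s)) * Real.exp x) := by
          rw [← e2]; ring
      _ ≤ D * z ^ (-(2*p)) * 1 := by
          gcongr
          rw [← Real.exp_add, Real.exp_le_one_iff]
          have : -(X^2 + X0^2) / (2*s) + x = -((X - X0)^2 / (2*s)) := by
            rw [hx]; field_simp; ring
          rw [this]
          have : 0 ≤ (X - X0)^2 / (2*s) := by positivity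
          linarith
      _ = _ := mul_one _
  · have hX1 : X ≤ 1 := Real.rpow_le_one_of_one_le_of_nonpos hz1 (by linarith)
    calc D * Real.exp (-(1 + X0^2) / (2*s)) * z ^ (-(2*p))
        = A * z ^ ((1:ℝ)/2 - 2*p) * Real.exp (-(1 + X0^2) / (2*s)) * ((x/2)^η / Real.Gamma (η+1)) := by
          linear_combination (-Real.exp (-(1 + X0^2) / (2*s))) * e2
      _ ≤ A * z ^ ((1:ℝ)/2 - 2*p) * Real.exp (-(X^2 + X0^2) / (2*s)) * besselI η x := by
          have : X^2 ≤ 1 := by nlinarith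
          gcongr

lemma zeta_meas (t ξ y0 p : ℝ) (ht : 0 < t) (hξ : 0 < ξ) (hy0 : 0 < y0) (hp : 1 < p) :
    AEMeasurable (zeta t ξ y0 p) (MeasureTheory.volume.restrict (Set.Ioi 0)) := by
  have hp1 : 0 < p - 1 := by linarith
  have hp2 : 1 - p ≠ 0 := by linarith
  unfold zeta
  refine AEMeasurable.mul (Measurable.aemeasurable (by fun_prop)) ?_
  refine bessel_meas _ (by positivity) (fun z => (y0 * z) ^ (1 - p) / ((1 - p) ^ 2 * ξ ^ 2 * t))
    (by fun_prop) ?_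
  intro z hz
  positivity

lemma C_bounds (t ξ y0 p : ℝ) (ht : 0 < t) (hξ : 0 < ξ) (hy0 : 0 < y0) (hp : 1 < p)
    (k : ℝ) (hk : 0 < k) :
    ∃ K > 0, ∃ c > 0, ∀ τ, 0 < τ → τ ≤ 1 →
      (∫ y in Set.Ioi (0 : ℝ), BS k y τ * zeta t ξ y0 p y) ≤ K * τ ^ (2*p-1) ∧
      c * τ ^ (2*p-1) ≤ ∫ y in Set.Ioi (0 : ℝ), BS k y τ * zeta t ξ y0 p y := by
  obtain ⟨K, hK, c, hc, hz⟩ := zeta_bounds t ξ y0 p ht hξ hy0 hp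
  obtain ⟨b, hb, hB⟩ := BS_lower k hk 1 one_pos
  set f : ℝ → ℝ := fun u => Real.exp (-(k^2/2/u)) * u^(-(2*p)) with hf
  have hfi : MeasureTheory.IntegrableOn f (Set.Ioi 0) :=
    int_pow (k^2/2) (2*p) (by positivity) (by linarith)
  have hf0 : 0 ≤ ∫ u in Set.Ioi (0:ℝ), f u := by
    refine MeasureTheory.setIntegral_nonneg measurableSet_Ioi ?_
    intro u hu
    have : 0 < u := hu
    simp only [hf]; positivity
  set b' := b * Real.exp (-((1+1)^3 * k^2/2)) with hb'
  have hb'0 : 0 < b' := by positivity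
  refine ⟨K * Real.exp (k/2) * (∫ u in Set.Ioi (0:ℝ), f u) + 1, by positivity,
    b' * c * 2^(-(2*p)), by positivity, fun τ hτ hτ1 => ?_⟩
  -- domination
  have hdom : ∀ y ∈ Set.Ioi (0:ℝ), BS k y τ * zeta t ξ y0 p y ≤
      (K * Real.exp (k/2) * τ^(2*p)) * f (τ * y) := by
    intro y hy
    have hy : 0 < y := hy
    have h1 := BS_upper k y τ hk hy hτ
    obtain ⟨h0, h2, -⟩ := hz y hy
    have e : K * Real.exp (k/2) * τ^(2*p) * f (τ * y) =
        (Real.exp (k/2) * Real.exp (-(k^2/(2*(y*τ))))) * (K * y ^ (-(2*p))) := by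
      simp only [hf]
      rw [Real.mul_rpow hτ.le hy.le, Real.rpow_neg hτ.le]
      have : k^2/2/(τ*y) = k^2/(2*(y*τ)) := by rw [div_div]; congr 1; ring
      rw [this]
      field_simp
    rw [e]
    exact mul_le_mul h1 h2 h0 (by positivity)
  have hnn : ∀ y ∈ Set.Ioi (0:ℝ), 0 ≤ BS k y τ * zeta t ξ y0 p y := fun y hy =>
    mul_nonneg (BS_nonneg k y τ hk hy hτ) (hz y hy).1
  have hdi : MeasureTheory.IntegrableOn (fun y => (K * Real.exp (k/2) * τ^(2*p)) * f (τ * y))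
      (Set.Ioi 0) := by
    apply MeasureTheory.Integrable.const_mul
    have := (MeasureTheory.integrableOn_Ioi_comp_mul_left_iff f 0 hτ).2 (by simpa using hfi)
    exact this
  have hint : MeasureTheory.IntegrableOn (fun y => BS k y τ * zeta t ξ y0 p y) (Set.Ioi 0) := by
    refine MeasureTheory.Integrable.mono' hdi ?_ ?_
    · exact ((BS_meas k τ).aemeasurable.mul (zeta_meas t ξ y0 p ht hξ hy0 hp)).aestronglyMeasurable
    · refine (MeasureTheory.ae_restrict_iff' measurableSet_Ioi).2 (Filter.Eventually.of_forall ?_)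
      intro y hy
      rw [Real.norm_of_nonneg (hnn y hy)]
      exact hdom y hy
  have hτp : 0 < τ^(2*p-1) := by positivity
  have eτ : τ^(2*p) = τ^(2*p-1) * τ := by
    rw [← Real.rpow_add_one hτ.ne']; congr 1; ring
  constructor
  · have h1 := MeasureTheory.setIntegral_mono_on hint hdi measurableSet_Ioi hdom
    rw [MeasureTheory.integral_const_mul, MeasureTheory.integral_comp_mul_left_Ioi f 0 hτ, mul_zero,
      smul_eq_mul, eτ] at h1
    refine h1.trans ?_
    have : K * Real.exp (k / 2) * (τ ^ (2 * p - 1) * τ) * (τ⁻¹ * ∫ u in Set.Ioi (0:ℝ), f u)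
      = K * Real.exp (k/2) * (∫ u in Set.Ioi (0:ℝ), f u) * τ^(2*p-1) := by field_simp
    rw [this]
    nlinarith
  · have hsub : Set.Ioc (1/τ) (2/τ) ⊆ Set.Ioi 0 := fun y hy =>
      lt_trans (by positivity : 0 < 1/τ) hy.1
    have h1 : ∫ y in Set.Ioc (1/τ) (2/τ), BS k y τ * zeta t ξ y0 p y ≤
        ∫ y in Set.Ioi (0 : ℝ), BS k y τ * zeta t ξ y0 p y :=
      MeasureTheory.setIntegral_mono_set hint
        ((MeasureTheory.ae_restrict_iff' measurableSet_Ioi).2 (Filter.Eventually.of_forall hnn))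
        (Filter.Eventually.of_forall hsub)
    have h2 : ∫ y in Set.Ioc (1/τ) (2/τ), (b' * (c * (2/τ)^(-(2*p)))) ≤
        ∫ y in Set.Ioc (1/τ) (2/τ), BS k y τ * zeta t ξ y0 p y := by
      refine MeasureTheory.setIntegral_mono_on (MeasureTheory.integrableOn_const (by simp)) (hint.mono_set hsub) measurableSet_Ioc ?_
      intro y hy
      have hy0' : 0 < y := hsub hy
      have hyτ : 1 ≤ y * τ := ((div_lt_iff₀ hτ).1 hy.1).le
      have hy1 : 1 ≤ y := by nlinarith
      have g1 : b' ≤ BS k y τ := by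
        refine le_trans ?_ (hB y τ hy0' hτ)
        rw [hb']
        refine mul_le_mul_of_nonneg_left (Real.exp_le_exp.2 ?_) hb.le
        apply neg_le_neg
        apply div_le_div_of_nonneg_left (by positivity) (by norm_num)
        linarith
      have g2 : c * (2/τ)^(-(2*p)) ≤ zeta t ξ y0 p y := by
        refine le_trans ?_ ((hz y hy0').2.2 hy1)
        refine mul_le_mul_of_nonneg_left ?_ hc.le
        exact Real.rpow_le_rpow_of_nonpos hy0' hy.2 (by linarith)
      exact mul_le_mul g1 g2 (by positivity) (hb'0.le.trans g1)
    refine le_trans (le_of_eq ?_) (h2.trans h1)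
    rw [MeasureTheory.setIntegral_const, Real.volume_real_Ioc_of_le (by gcongr; norm_num), smul_eq_mul,
      Real.div_rpow (by norm_num) hτ.le, Real.rpow_neg hτ.le, eτ]
    field_simp
    norm_num

lemma final_limit (k a c K : ℝ) (hk : 0 < k) (ha : 0 < a) (hc : 0 < c) (hK : 0 < K) (v : ℝ → ℝ)
    (hv : ∀ᶠ τ in nhdsWithin (0:ℝ) (Set.Ioi 0), 0 < v τ)
    (h1 : ∀ᶠ τ in nhdsWithin (0:ℝ) (Set.Ioi 0),
      c * τ^a ≤ Real.exp (k/2) * Real.exp (-(k^2/(2*v τ))))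
    (h2 : ∀ ε > 0, ∃ b > 0, ∀ᶠ τ in nhdsWithin (0:ℝ) (Set.Ioi 0),
      b * Real.exp (-((1+ε)^3 * k^2/(2*v τ))) ≤ K * τ^a) :
    Filter.Tendsto (fun τ => v τ * (2 * a) * |Real.log τ| / k^2)
      (nhdsWithin (0:ℝ) (Set.Ioi 0)) (nhds 1) := by
  set l := nhdsWithin (0:ℝ) (Set.Ioi 0) with hl
  have hpos : ∀ᶠ τ in l, 0 < τ := self_mem_nhdsWithin
  have hlog : Filter.Tendsto (fun τ => -Real.log τ) l Filter.atTop :=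
    Filter.tendsto_neg_atBot_atTop.comp Real.tendsto_log_nhdsGT_zero
  have hinv : ∀ d : ℝ, Filter.Tendsto (fun τ => d / (a * (-Real.log τ))) l (nhds 0) := fun d =>
    (hlog.const_mul_atTop ha).const_div_atTop d
  have hL : ∀ᶠ τ in l, 0 < -Real.log τ := hlog.eventually_gt_atTop 0
  have key : Filter.Tendsto (fun τ => k^2/(2*v τ) / (a * (-Real.log τ))) l (nhds 1) := by
    rw [tendsto_order]
    constructor
    · intro B hB
      have hcont : Filter.Tendsto (fun ε : ℝ => (1+ε)^3 * B) (nhdsWithin 0 (Set.Ioi 0)) (nhds ((1+0)^3*B)) :=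
        (Continuous.tendsto (by fun_prop) 0).mono_left nhdsWithin_le_nhds
      have hBe : ∀ᶠ ε in nhdsWithin (0:ℝ) (Set.Ioi 0), (1+ε)^3*B < 1 :=
        hcont.eventually_lt_const (by linarith)
      obtain ⟨ε, hε1, hε0⟩ := (hBe.and self_mem_nhdsWithin).exists
      have hε0 : 0 < ε := hε0
      obtain ⟨b, hb, h3⟩ := h2 ε hε0
      have hlim : Filter.Tendsto (fun τ => 1 + (Real.log b - Real.log K)/(a * (-Real.log τ))) l (nhds 1) := by
        simpa using (hinv (Real.log b - Real.log K)).const_add 1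
      filter_upwards [hpos, hL, hv, h3, hlim.eventually_const_lt hε1] with τ hτ hLτ hvτ h3τ h4
      have h5 := Real.log_le_log (by positivity) h3τ
      rw [Real.log_mul hb.ne' (Real.exp_pos _).ne', Real.log_exp, Real.log_mul hK.ne' (by positivity),
        Real.log_rpow hτ] at h5
      have haL : 0 < a * (-Real.log τ) := by positivity
      have h6 : 1 + (Real.log b - Real.log K)/(a * (-Real.log τ)) ≤
          (1+ε)^3 * (k^2/(2*v τ) / (a * (-Real.log τ))) := by
        have e1 : 1 + (Real.log b - Real.log K)/(a * (-Real.log τ)) =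
          (a * (-Real.log τ) + (Real.log b - Real.log K)) / (a * (-Real.log τ)) := by
          rw [add_div, div_self haL.ne']
        rw [e1, ← mul_div_assoc]
        gcongr
        rw [← mul_div_assoc]
        linarith
      have h7 := h4.trans_le h6
      exact lt_of_mul_lt_mul_left h7 (by positivity)
    · intro B hB
      have hlim : Filter.Tendsto (fun τ => 1 + (k/2 - Real.log c)/(a * (-Real.log τ))) l (nhds 1) := by
        simpa using (hinv (k/2 - Real.log c)).const_add 1
      filter_upwards [hpos, hL, hv, h1, hlim.eventually_lt_const hB] with τ hτ hLτ hvτ h3τ h4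
      have h5 := Real.log_le_log (by positivity) h3τ
      rw [Real.log_mul (Real.exp_pos _).ne' (Real.exp_pos _).ne', Real.log_exp, Real.log_exp,
        Real.log_mul hc.ne' (by positivity), Real.log_rpow hτ] at h5
      have haL : 0 < a * (-Real.log τ) := by positivity
      refine lt_of_le_of_lt ?_ h4
      have e1 : 1 + (k/2 - Real.log c)/(a * (-Real.log τ)) =
          (a * (-Real.log τ) + (k/2 - Real.log c)) / (a * (-Real.log τ)) := by
          rw [add_div, div_self haL.ne']
      rw [e1]
      gcongr
      linarith
  have := key.inv₀ one_ne_zero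
  rw [inv_one] at this
  refine this.congr' ?_
  filter_upwards [hL, hv] with τ hLτ hvτ
  rw [abs_of_neg (by linarith)]
  field_simp

theorem stmt_14 (t ξ y0 p : ℝ) (ht : 0 < t) (hξ : 0 < ξ) (hy0 : 0 < y0) (hp : 1 < p)
    (k : ℝ) (hk : 0 < k) :
    let η : ℝ := 1 / (2 * (p - 1))
    -- the CEV density (case `p > 1`)
    let ζ : ℝ → ℝ := fun z =>
      Real.sqrt y0 * z ^ ((1 : ℝ) / 2 - 2 * p) / ((p - 1) * ξ ^ 2 * t)
        * Real.exp (-(z ^ (2 * (1 - p)) + y0 ^ (2 * (1 - p))) / (2 * ξ ^ 2 * t * (1 - p) ^ 2))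
        * besselI η ((y0 * z) ^ (1 - p) / ((1 - p) ^ 2 * ξ ^ 2 * t))
    -- the call price
    let C : ℝ → ℝ := fun τ => ∫ y in Set.Ioi (0 : ℝ), BS k y τ * ζ y
    ∀ τ₀ > (0 : ℝ), ∀ σ : ℝ → ℝ,
      (∀ τ ∈ Set.Ioo (0 : ℝ) τ₀, 0 < σ τ ∧ BS k (σ τ ^ 2) τ = C τ) →
      Filter.Tendsto (fun τ => σ τ ^ 2 * (2 * (2 * p - 1)) * τ * |Real.log τ| / k ^ 2)
        (nhdsWithin 0 (Set.Ioi 0)) (nhds 1) := by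
  intro η ζ C τ₀ hτ₀ σ hσ
  obtain ⟨K, hK, c, hc, hC⟩ := C_bounds t ξ y0 p ht hξ hy0 hp k hk
  have hsmall : ∀ᶠ τ in nhdsWithin (0:ℝ) (Set.Ioi 0), τ ∈ Set.Ioo (0:ℝ) (min τ₀ 1) :=
    Ioo_mem_nhdsGT (by positivity)
  have hall : ∀ᶠ τ in nhdsWithin (0:ℝ) (Set.Ioi 0), 0 < τ ∧ 0 < σ τ ∧
      BS k (σ τ ^ 2) τ ≤ K * τ ^ (2*p-1) ∧ c * τ ^ (2*p-1) ≤ BS k (σ τ ^ 2) τ := by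
    filter_upwards [hsmall] with τ hτ
    have h1 := hσ τ ⟨hτ.1, hτ.2.trans_le (min_le_left _ _)⟩
    have h2 := hC τ hτ.1 (hτ.2.trans_le (min_le_right _ _)).le
    rw [h1.2]
    exact ⟨hτ.1, h1.1, h2⟩
  have h := final_limit k (2*p-1) c K hk (by linarith) hc hK (fun τ => σ τ ^ 2 * τ)
    (by
      filter_upwards [hall] with τ h
      obtain ⟨h1, h2, -⟩ := h
      positivity)
    (by
      filter_upwards [hall] with τ h
      obtain ⟨h1, h2, h3, h4⟩ := h
      exact h4.trans (BS_upper k _ τ hk (by positivity) h1))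
    (by
      intro ε hε
      obtain ⟨b, hb, hB⟩ := BS_lower k hk ε hε
      refine ⟨b, hb, ?_⟩
      filter_upwards [hall] with τ h
      obtain ⟨h1, h2, h3, h4⟩ := h
      exact (hB _ τ (by positivity) h1).trans h3)
  refine h.congr fun τ => ?_
  ring
end

section
/- Fix t > 0, ξ > 0, y₀ > 0 and p < 1/4, and let C(k,τ) be the call price in the reflected CEV-variance model. Let k ∈ ℝ and suppose σ : (τ₁, ∞) → (0,∞) satisfies BS(k, σ(τ)², τ) = C(k,τ) for all τ > τ₁ (the implied volatility). Then lim_{τ→∞} σ(τ)²·τ / ( 8(1-2p)·log τ ) = 1; that is, σ(τ)² ∼ 8(1-2p)·(log τ)/τ as τ → ∞. -/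
open MeasureTheory Filter Topology

namespace Aux

noncomputable def g (s : ℝ) : ℝ := Real.exp (-(s ^ 2) / 2) / Real.sqrt (2 * Real.pi)

lemma g_pos (s : ℝ) : 0 < g s := by unfold g; positivity

lemma g_int : Integrable g := by
  have h := (integrable_exp_neg_mul_sq (b := 1/2) (by norm_num)).div_const (Real.sqrt (2 * Real.pi))
  refine h.congr (Eventually.of_forall fun s => ?_)
  simp only [g]; congr 2; ring

lemma g_total : ∫ s, g s = 1 := by
  have h := integral_gaussian (1/2)
  unfold g
  rw [integral_div]
  have : (fun s : ℝ => Real.exp (-(s ^ 2) / 2)) = fun s => Real.exp (-(1/2) * s ^ 2) := by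
    ext s; congr 1; ring
  rw [this, h]
  have e : Real.pi / (1/2) = 2 * Real.pi := by ring
  rw [e]
  exact div_self (by positivity)

lemma Phi_eq (x : ℝ) : Phi x = ∫ s in Set.Iic x, g s := rfl

lemma Phi_nonneg (x : ℝ) : 0 ≤ Phi x := by
  rw [Phi_eq]; exact integral_nonneg fun s => (g_pos s).le

lemma Phi_mono : Monotone Phi := by
  intro x y h
  rw [Phi_eq, Phi_eq]
  exact setIntegral_mono_set g_int.integrableOn (Eventually.of_forall fun s => (g_pos s).le)
    (Set.Iic_subset_Iic.2 h).eventuallyLE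

lemma Phi_le_one (x : ℝ) : Phi x ≤ 1 := by
  rw [Phi_eq, ← g_total]
  exact setIntegral_le_integral g_int (Eventually.of_forall fun s => (g_pos s).le)

lemma Phi_neg (x : ℝ) : 1 - Phi x = Phi (-x) := by
  have h1 : (∫ s in Set.Iic x, g s) + ∫ s in Set.Ioi x, g s = ∫ s, g s :=
    intervalIntegral.integral_Iic_add_Ioi g_int.integrableOn g_int.integrableOn
  have h2 : (∫ s in Set.Iic (-x), g (-s)) = ∫ s in Set.Ioi x, g s := by
    rw [integral_comp_neg_Iic]; simp
  have h3 : (fun s => g (-s)) = g := by ext s; simp [g]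
  simp only [h3] at h2
  rw [g_total] at h1
  rw [Phi_eq, Phi_eq, h2]; linarith

lemma Phi_chernoff (x l : ℝ) (hl : 0 ≤ l) : Phi x ≤ Real.exp (l * x + l ^ 2 / 2) := by
  have key : ∀ s, g s * Real.exp (l * (x - s)) = Real.exp (l * x + l ^ 2 / 2) * g (s + l) := by
    intro s
    simp only [g]
    rw [div_mul_eq_mul_div, ← Real.exp_add, mul_div_assoc', ← Real.exp_add]
    congr 2; ring
  have hi : Integrable fun s => g s * Real.exp (l * (x - s)) := by
    simp only [key]
    exact (g_int.comp_add_right l).const_mul _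
  calc Phi x = ∫ s in Set.Iic x, g s := rfl
    _ ≤ ∫ s in Set.Iic x, g s * Real.exp (l * (x - s)) := by
        apply setIntegral_mono_on g_int.integrableOn hi.integrableOn measurableSet_Iic
        intro s hs
        have : 1 ≤ Real.exp (l * (x - s)) :=
          Real.one_le_exp (mul_nonneg hl (sub_nonneg.2 hs))
        nlinarith [g_pos s]
    _ ≤ ∫ s, g s * Real.exp (l * (x - s)) :=
        setIntegral_le_integral hi (Eventually.of_forall fun s => by
          have := g_pos s; simp only [Pi.zero_apply]; positivity)
    _ = _ := by
        simp only [key]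
        rw [integral_const_mul, integral_add_right_eq_self g l, g_total, mul_one]

lemma Phi_lower (x : ℝ) (hx : 0 ≤ x) : g (x + 1) ≤ Phi (-x) := by
  have h1 : ∫ s in Set.Ioc (-x-1) (-x), g (x+1) ≤ ∫ s in Set.Ioc (-x-1) (-x), g s := by
    apply setIntegral_mono_on (by simp) g_int.integrableOn measurableSet_Ioc
    intro s hs
    simp only [g]
    have : s ^ 2 ≤ (x+1)^2 := by nlinarith [hs.1, hs.2]
    gcongr
  have h2 : ∫ s in Set.Ioc (-x-1) (-x), g s ≤ ∫ s in Set.Iic (-x), g s :=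
    setIntegral_mono_set g_int.integrableOn (Eventually.of_forall fun s => (g_pos s).le)
      Set.Ioc_subset_Iic_self.eventuallyLE
  have h3 : ∫ s in Set.Ioc (-x-1) (-x), g (x+1) = g (x+1) := by simp
  rw [Phi_eq]; linarith

/-- G = 1 - BS -/
noncomputable def G (k v : ℝ) : ℝ :=
  Phi (k / Real.sqrt v - Real.sqrt v / 2) + Real.exp k * Phi (-k / Real.sqrt v - Real.sqrt v / 2)

lemma BS_eq (k w T : ℝ) : BS k w T = 1 - G k (w * T) := by
  have := Phi_neg (-k / Real.sqrt (w * T) + Real.sqrt (w * T) / 2)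
  have e : -(-k / Real.sqrt (w * T) + Real.sqrt (w * T) / 2)
    = k / Real.sqrt (w * T) - Real.sqrt (w * T) / 2 := by ring
  rw [e] at this
  simp only [BS, G]; linarith

lemma G_nonneg (k v : ℝ) : 0 ≤ G k v :=
  add_nonneg (Phi_nonneg _) (mul_nonneg (Real.exp_pos _).le (Phi_nonneg _))

lemma G_le (k v : ℝ) : G k v ≤ 1 + Real.exp k := by
  unfold G
  have := Phi_le_one (k / Real.sqrt v - Real.sqrt v / 2)
  have h2 := Phi_le_one (-k / Real.sqrt v - Real.sqrt v / 2)
  nlinarith [Real.exp_pos k]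

lemma G_meas (k : ℝ) : Measurable (G k) := by
  unfold G
  have := Phi_mono.measurable
  fun_prop

lemma G_upper (k v : ℝ) (hv : 0 < v) : G k v ≤ 2 * Real.exp (k / 2) * Real.exp (-v / 8) := by
  have hs : 0 < Real.sqrt v := Real.sqrt_pos.2 hv
  have hq : Real.sqrt v ^ 2 = v := Real.sq_sqrt hv.le
  have h1 := Phi_chernoff (k / Real.sqrt v - Real.sqrt v / 2) (Real.sqrt v / 2) (by positivity)
  have h2 := Phi_chernoff (-k / Real.sqrt v - Real.sqrt v / 2) (Real.sqrt v / 2) (by positivity)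
  have e1 : Real.sqrt v / 2 * (k / Real.sqrt v - Real.sqrt v / 2) + (Real.sqrt v / 2) ^ 2 / 2
      = k / 2 + -v / 8 := by
    rw [← hq]; simp only [Real.sqrt_sq hs.le]; field_simp; ring
  have e2 : Real.sqrt v / 2 * (-k / Real.sqrt v - Real.sqrt v / 2) + (Real.sqrt v / 2) ^ 2 / 2
      = -k + (k / 2 + -v / 8) := by
    rw [← hq]; simp only [Real.sqrt_sq hs.le]; field_simp; ring
  rw [e1, Real.exp_add] at h1
  rw [e2, Real.exp_add, Real.exp_add (k/2)] at h2
  have h3 := mul_le_mul_of_nonneg_left h2 (Real.exp_pos k).le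
  rw [← mul_assoc, ← Real.exp_add, add_neg_cancel, Real.exp_zero, one_mul] at h3
  unfold G; linarith

lemma G_lower (k v : ℝ) : min 1 (Real.exp k) * g (Real.sqrt v / 2 + 1) ≤ G k v := by
  have hs : 0 ≤ Real.sqrt v := Real.sqrt_nonneg v
  have h0 := Phi_lower (Real.sqrt v / 2) (by positivity)
  have hg := g_pos (Real.sqrt v / 2 + 1)
  have p1 := Phi_nonneg (k / Real.sqrt v - Real.sqrt v / 2)
  have p2 := Phi_nonneg (-k / Real.sqrt v - Real.sqrt v / 2)
  unfold G
  rcases le_total 0 k with hk | hk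
  · have : Phi (-(Real.sqrt v / 2)) ≤ Phi (k / Real.sqrt v - Real.sqrt v / 2) := by
      apply Phi_mono; have : 0 ≤ k / Real.sqrt v := by positivity
      linarith
    have h4 : min 1 (Real.exp k) ≤ 1 := min_le_left _ _
    nlinarith [mul_nonneg (Real.exp_pos k).le p2]
  · have : Phi (-(Real.sqrt v / 2)) ≤ Phi (-k / Real.sqrt v - Real.sqrt v / 2) := by
      apply Phi_mono
      have : 0 ≤ -k / Real.sqrt v := div_nonneg (by linarith) hs
      linarith
    have h4 : min 1 (Real.exp k) ≤ Real.exp k := min_le_right _ _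
    have h5 := mul_le_mul_of_nonneg_left (h0.trans this) (Real.exp_pos k).le
    nlinarith

lemma final_limit (k q c1 c2 τ₀ : ℝ) (hq : 0 < q) (h1 : 0 < c1) (h2 : 0 < c2) (v : ℝ → ℝ)
    (hv : ∀ τ > τ₀, 0 < v τ)
    (hl : ∀ τ > τ₀, c1 * τ ^ (-q) ≤ G k (v τ)) (hu : ∀ τ > τ₀, G k (v τ) ≤ c2 * τ ^ (-q)) :
    Tendsto (fun τ => v τ / (8 * q * Real.log τ)) atTop (𝓝 1) := by
  set K := 2 * Real.exp (k / 2) with hK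
  have hKp : 0 < K := by positivity
  set m := min 1 (Real.exp k) with hm
  have hmp : 0 < m := lt_min one_pos (Real.exp_pos k)
  set c3 := 8 * (Real.log K - Real.log c1)
  set c4 := Real.log c2 - Real.log m + Real.log (Real.sqrt (2 * Real.pi))
  have up : ∀ τ > max τ₀ 0, v τ ≤ 8 * q * Real.log τ + c3 := by
    intro τ hτ
    have hτ0 : 0 < τ := (le_max_right _ _).trans_lt hτ
    have hτ1 : τ₀ < τ := (le_max_left _ _).trans_lt hτ
    have h := (hl τ hτ1).trans (G_upper k _ (hv τ hτ1))
    have h' := Real.log_le_log (by positivity) h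
    rw [Real.log_mul h1.ne' (by positivity), Real.log_rpow hτ0,
      Real.log_mul (by positivity) (by positivity), Real.log_exp] at h'
    simp only [c3, hK]; linarith
  have lo : ∀ τ > max τ₀ 0, 8 * q * Real.log τ - 8 * c4 - 4 - 4 * Real.sqrt (v τ) ≤ v τ := by
    intro τ hτ
    have hτ0 : 0 < τ := (le_max_right _ _).trans_lt hτ
    have hτ1 : τ₀ < τ := (le_max_left _ _).trans_lt hτ
    have h := (G_lower k (v τ)).trans (hu τ hτ1)
    have h' := Real.log_le_log (mul_pos hmp (g_pos _)) h
    have hsq := Real.sq_sqrt (hv τ hτ1).le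
    rw [Real.log_mul h2.ne' (by positivity), Real.log_rpow hτ0,
      Real.log_mul hmp.ne' (g_pos _).ne', g, Real.log_div (by positivity) (by positivity),
      Real.log_exp] at h'
    simp only [c4]
    nlinarith
  have hx : Tendsto (fun τ => 8 * q * Real.log τ) atTop atTop :=
    Real.tendsto_log_atTop.const_mul_atTop (by positivity)
  have hxi := tendsto_inv_atTop_zero.comp hx
  have hxs := tendsto_inv_atTop_zero.comp (Real.tendsto_sqrt_atTop.comp hx)
  have T1 : Tendsto (fun τ => 1 - (8 * c4 + 4) * (8 * q * Real.log τ)⁻¹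
      - 8 * (Real.sqrt (8 * q * Real.log τ))⁻¹) atTop (𝓝 1) := by
    have := ((tendsto_const_nhds (x := (1:ℝ))).sub (hxi.const_mul (8 * c4 + 4))).sub
      (hxs.const_mul 8)
    simpa using this
  have T2 : Tendsto (fun τ => 1 + c3 * (8 * q * Real.log τ)⁻¹) atTop (𝓝 1) := by
    have := ((tendsto_const_nhds (x := (1:ℝ))).add (hxi.const_mul c3))
    simpa using this
  refine tendsto_of_tendsto_of_tendsto_of_le_of_le' T1 T2 ?_ ?_
  · filter_upwards [eventually_gt_atTop (max τ₀ 0), hx.eventually_ge_atTop (max c3 1)] with τ hτ hb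
    have a1 := up τ hτ
    have a2 := lo τ hτ
    set x := 8 * q * Real.log τ
    have b1 : c3 ≤ x := (le_max_left _ _).trans hb
    have b2 : 0 < x := lt_of_lt_of_le one_pos ((le_max_right _ _).trans hb)
    have hs : Real.sqrt (v τ) ≤ 2 * Real.sqrt x := by
      rw [show (2:ℝ) * Real.sqrt x = Real.sqrt (2 ^ 2 * x) by
        rw [Real.sqrt_mul (show (0:ℝ) ≤ 2 ^ 2 by norm_num) x, Real.sqrt_sq (by norm_num)]]
      exact Real.sqrt_le_sqrt (by linarith)
    rw [le_div_iff₀ b2]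
    have hsx : 0 < Real.sqrt x := Real.sqrt_pos.2 b2
    have e : (Real.sqrt x)⁻¹ * x = Real.sqrt x := by
      rw [inv_mul_eq_div, Real.div_sqrt]
    have e2 : x⁻¹ * x = 1 := inv_mul_cancel₀ b2.ne'
    calc _ = x - (8 * c4 + 4) * (x⁻¹ * x) - 8 * ((Real.sqrt x)⁻¹ * x) := by ring
      _ ≤ v τ := by rw [e, e2]; linarith
  · filter_upwards [eventually_gt_atTop (max τ₀ 0), hx.eventually_ge_atTop 1] with τ hτ hb
    have a1 := up τ hτ
    set x := 8 * q * Real.log τ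
    have b2 : 0 < x := by linarith
    rw [div_le_iff₀ b2, add_mul, mul_assoc, inv_mul_cancel₀ b2.ne']
    linarith

lemma D_upper (k r B : ℝ) (hr : -1 < r) (ζ : ℝ → ℝ) (hB : 0 < B)
    (hz0 : ∀ y > 0, 0 ≤ ζ y) (hzB : ∀ y > 0, ζ y ≤ B * y ^ r) :
    ∃ c2 > 0, ∀ τ > 0, ∫ y in Set.Ioi (0:ℝ), G k (y * τ) * ζ y ≤ c2 * τ ^ (-(r+1)) := by
  have hΓ : 0 < Real.Gamma (r + 1) := Real.Gamma_pos_of_pos (by linarith)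
  refine ⟨2 * Real.exp (k / 2) * B * (8 ^ (r+1) * Real.Gamma (r+1)), by positivity, ?_⟩
  intro τ hτ
  have hI := Real.integral_rpow_mul_exp_neg_mul_Ioi (a := r + 1) (r := τ / 8)
    (by linarith) (by positivity)
  have hint : IntegrableOn (fun y : ℝ => y ^ (r + 1 - 1) * Real.exp (-(τ / 8 * y)))
      (Set.Ioi 0) := by
    apply Integrable.of_integral_ne_zero
    rw [hI]; positivity
  have e : (1 / (τ / 8)) ^ (r+1) = 8 ^ (r+1) * τ ^ (-(r+1)) := by
    rw [one_div_div, Real.div_rpow (by norm_num) hτ.le, Real.rpow_neg hτ.le]; rfl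
  calc ∫ y in Set.Ioi (0:ℝ), G k (y * τ) * ζ y
      ≤ ∫ y in Set.Ioi (0:ℝ), 2 * Real.exp (k / 2) * B *
          (y ^ (r + 1 - 1) * Real.exp (-(τ / 8 * y))) := by
        apply integral_mono_of_nonneg
        · filter_upwards [ae_restrict_mem measurableSet_Ioi] with y hy
          exact mul_nonneg (G_nonneg _ _) (hz0 y hy)
        · exact hint.const_mul _
        · filter_upwards [ae_restrict_mem measurableSet_Ioi] with y hy
          have hy : 0 < y := hy
          have h1 := G_upper k (y * τ) (by positivity)
          have h2 := hzB y hy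
          have := mul_le_mul h1 h2 (hz0 y hy) (by positivity)
          refine this.trans_eq ?_
          rw [add_sub_cancel_right, show -(y * τ) / 8 = -(τ / 8 * y) by ring]; ring
    _ = _ := by rw [integral_const_mul, hI, e]; ring

lemma D_lower (k r A : ℝ) (ζ : ℝ → ℝ) (hA : 0 < A)
    (hint : IntegrableOn ζ (Set.Ioi 0))
    (hz0 : ∀ y > 0, 0 ≤ ζ y) (hzA : ∀ y > 0, y ≤ 2 → A * y ^ r ≤ ζ y) :
    ∃ c1 > 0, ∀ τ > 1, c1 * τ ^ (-(r+1)) ≤ ∫ y in Set.Ioi (0:ℝ), G k (y * τ) * ζ y := by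
  set m := min 1 (Real.exp k)
  have hm : 0 < m := lt_min one_pos (Real.exp_pos k)
  set c0 := m * g (Real.sqrt 2 / 2 + 1)
  have hc0 : 0 < c0 := mul_pos hm (g_pos _)
  set d := min 1 ((2:ℝ) ^ r)
  have hd : 0 < d := lt_min one_pos (by positivity)
  refine ⟨c0 * A * d, by positivity, ?_⟩
  intro τ hτ
  have hτ0 : 0 < τ := by linarith
  have hGi : IntegrableOn (fun y => G k (y * τ) * ζ y) (Set.Ioi 0) := by
    apply Integrable.bdd_mul (c := 1 + Real.exp k) hint
    · have := G_meas k
      exact (this.comp (measurable_id.mul_const τ)).aestronglyMeasurable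
    · refine Eventually.of_forall fun y => ?_
      rw [Real.norm_of_nonneg (G_nonneg _ _)]; exact G_le _ _
  have hsub : Set.Ioc (1/τ) (2/τ) ⊆ Set.Ioi 0 := fun y hy => lt_trans (by positivity) hy.1
  have step1 : ∫ y in Set.Ioc (1/τ) (2/τ), G k (y * τ) * ζ y
      ≤ ∫ y in Set.Ioi (0:ℝ), G k (y * τ) * ζ y := by
    apply setIntegral_mono_set hGi _ hsub.eventuallyLE
    filter_upwards [ae_restrict_mem measurableSet_Ioi] with y hy
    exact mul_nonneg (G_nonneg _ _) (hz0 y hy)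
  have step2 : ∫ y in Set.Ioc (1/τ) (2/τ), c0 * (A * (d * τ ^ (-r)))
      ≤ ∫ y in Set.Ioc (1/τ) (2/τ), G k (y * τ) * ζ y := by
    apply setIntegral_mono_on (integrableOn_const measure_Ioc_lt_top.ne) (hGi.mono_set hsub) measurableSet_Ioc
    intro y hy
    have hy0 : 0 < y := hsub hy
    have y1 : 1 ≤ y * τ := by have := hy.1; rw [div_lt_iff₀ hτ0] at this; exact this.le
    have y2 : y * τ ≤ 2 := by have := hy.2; rwa [le_div_iff₀ hτ0] at this
    have y3 : y ≤ 2 := by nlinarith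
    have hG : c0 ≤ G k (y * τ) := by
      refine le_trans ?_ (G_lower k (y * τ))
      have : g (Real.sqrt 2 / 2 + 1) ≤ g (Real.sqrt (y * τ) / 2 + 1) := by
        simp only [g]
        have := Real.sqrt_le_sqrt y2
        have h0 := Real.sqrt_nonneg (y * τ)
        gcongr
      exact mul_le_mul_of_nonneg_left this hm.le
    have hdr : d ≤ (y * τ) ^ r := by
      rcases le_total 0 r with h | h
      · exact (min_le_left _ _).trans (Real.one_le_rpow y1 h)
      · exact (min_le_right _ _).trans (Real.rpow_le_rpow_of_nonpos (by positivity) y2 h)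
    have hyr : d * τ ^ (-r) ≤ y ^ r := by
      have : y ^ r = (y * τ) ^ r * τ ^ (-r) := by
        rw [Real.mul_rpow hy0.le hτ0.le, mul_assoc, ← Real.rpow_add hτ0]; simp
      rw [this]; gcongr
    have hz : A * (d * τ ^ (-r)) ≤ ζ y :=
      (mul_le_mul_of_nonneg_left hyr hA.le).trans (hzA y hy0 y3)
    exact mul_le_mul hG hz (by positivity) (G_nonneg _ _)
  refine le_trans (le_of_eq ?_) (step2.trans step1)
  rw [setIntegral_const, Real.volume_real_Ioc_of_le (by gcongr; norm_num)]
  rw [show -(r+1) = -r + -1 by ring, Real.rpow_add hτ0, Real.rpow_neg_one, smul_eq_mul]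
  ring

lemma main_abs (k r A B : ℝ) (hr : -1 < r) (ζ : ℝ → ℝ) (hA : 0 < A) (hB : 0 < B)
    (h1 : ∫ y in Set.Ioi (0:ℝ), ζ y = 1)
    (hz0 : ∀ y > 0, 0 ≤ ζ y) (hzA : ∀ y > 0, y ≤ 2 → A * y ^ r ≤ ζ y)
    (hzB : ∀ y > 0, ζ y ≤ B * y ^ r) (τ₁ : ℝ) (σ : ℝ → ℝ)
    (hσ : ∀ τ > τ₁, 0 < σ τ ∧ BS k (σ τ ^ 2) τ = ∫ y in Set.Ioi (0:ℝ), BS k y τ * ζ y) :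
    Tendsto (fun τ => σ τ ^ 2 * τ / (8 * (r + 1) * Real.log τ)) atTop (𝓝 1) := by
  have hint : IntegrableOn ζ (Set.Ioi 0) :=
    Integrable.of_integral_ne_zero (by rw [h1]; norm_num)
  obtain ⟨c1, hc1, hl⟩ := D_lower k r A ζ hA hint hz0 hzA
  obtain ⟨c2, hc2, hu⟩ := D_upper k r B hr ζ hB hz0 hzB
  have key : ∀ τ > τ₁, G k (σ τ ^ 2 * τ) = ∫ y in Set.Ioi (0:ℝ), G k (y * τ) * ζ y := by
    intro τ hτ
    have h := (hσ τ hτ).2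
    have hGi : IntegrableOn (fun y => G k (y * τ) * ζ y) (Set.Ioi 0) := by
      apply Integrable.bdd_mul (c := 1 + Real.exp k) hint
      · have := G_meas k
        exact (this.comp (measurable_id.mul_const τ)).aestronglyMeasurable
      · refine Eventually.of_forall fun y => ?_
        rw [Real.norm_of_nonneg (G_nonneg _ _)]; exact G_le _ _
    simp only [BS_eq, sub_mul, one_mul] at h
    rw [integral_sub hint hGi, h1] at h
    linarith
  refine final_limit k (r+1) c1 c2 (max τ₁ 1) (by linarith) hc1 hc2 (fun τ => σ τ ^ 2 * τ) ?_ ?_ ?_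
  · intro τ hτ
    have := (hσ τ ((le_max_left _ _).trans_lt hτ)).1
    have h2 : 1 < τ := (le_max_right _ _).trans_lt hτ
    positivity
  · intro τ hτ
    have h2 : 1 < τ := (le_max_right _ _).trans_lt hτ
    rw [key τ ((le_max_left _ _).trans_lt hτ)]; exact hl τ h2
  · intro τ hτ
    have h2 : 1 < τ := (le_max_right _ _).trans_lt hτ
    rw [key τ ((le_max_left _ _).trans_lt hτ)]; exact hu τ (by linarith)

/-- term of the expansion of the density -/
noncomputable def F (a b L ν p : ℝ) (m : ℕ) (y : ℝ) : ℝ :=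
  2 * a * Real.exp (-L) * L ^ m * b ^ ((m:ℝ) + ν) / ((m.factorial : ℝ) * Real.Gamma ((m:ℝ) + ν))
    * (y ^ (2 * a * m - 2 * p) * Real.exp (-b * y ^ (2 * a)))

lemma summ (L ν : ℝ) (hL : 0 < L) (hν : 0 < ν) :
    Summable fun m : ℕ => L ^ m / Real.Gamma ((m:ℝ) + ν) := by
  have hΓ : ∀ m : ℕ, 0 < Real.Gamma ((m:ℝ) + ν) := fun m => Real.Gamma_pos_of_pos (by positivity)
  apply summable_of_ratio_test_tendsto_lt_one (l := 0) one_pos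
  · exact Eventually.of_forall fun m => (div_pos (by positivity) (hΓ m)).ne'
  · have : (fun n : ℕ => ‖L ^ (n+1) / Real.Gamma (((n+1 : ℕ):ℝ) + ν)‖ / ‖L ^ n / Real.Gamma ((n:ℝ) + ν)‖)
        = fun n : ℕ => L / ((n:ℝ) + ν) := by
      ext n
      rw [Real.norm_of_nonneg (div_pos (by positivity) (hΓ _)).le,
        Real.norm_of_nonneg (div_pos (by positivity) (hΓ _)).le]
      have e : (((n+1 : ℕ):ℝ) + ν) = ((n:ℝ) + ν) + 1 := by push_cast; ring
      rw [e, Real.Gamma_add_one (by positivity)]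
      have := hΓ n
      field_simp
      ring
    rw [this]
    exact (tendsto_natCast_atTop_atTop.atTop_add tendsto_const_nhds).const_div_atTop L

section
variable {a b L ν p : ℝ} (ha : 0 < a) (hb : 0 < b) (hL : 0 < L) (hν : 0 < ν)
  (hrel : 1 - 2 * p = 2 * a * ν)
include ha hb hL hν

lemma F_nonneg (m : ℕ) (y : ℝ) (hy : 0 < y) : 0 ≤ F a b L ν p m y := by
  have := Real.Gamma_pos_of_pos (show 0 < (m:ℝ) + ν by positivity)
  unfold F; positivity

lemma F_le (m : ℕ) (y : ℝ) (hy : 0 < y) : F a b L ν p m y ≤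
    2 * a * Real.exp (-L) * b ^ ν * (L ^ m / Real.Gamma ((m:ℝ) + ν)) * y ^ (-2 * p) := by
  have hΓ := Real.Gamma_pos_of_pos (show 0 < (m:ℝ) + ν by positivity)
  have h := Real.pow_div_factorial_le_exp (b * y ^ (2 * a)) (by positivity) m
  have h2 : (b * y ^ (2 * a)) ^ m / (m.factorial : ℝ) * Real.exp (-b * y ^ (2 * a)) ≤ 1 := by
    calc _ ≤ Real.exp (b * y ^ (2 * a)) * Real.exp (-b * y ^ (2 * a)) := by gcongr
      _ = 1 := by rw [← Real.exp_add]; simp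
  have e : F a b L ν p m y =
    2 * a * Real.exp (-L) * b ^ ν * (L ^ m / Real.Gamma ((m:ℝ) + ν)) * y ^ (-2 * p) *
    ((b * y ^ (2 * a)) ^ m / (m.factorial : ℝ) * Real.exp (-b * y ^ (2 * a))) := by
    unfold F
    rw [Real.rpow_add hb, Real.rpow_natCast, show 2 * a * m - 2 * p = 2 * a * m + (-2 * p) by ring,
      Real.rpow_add hy, Real.rpow_mul hy.le, Real.rpow_natCast, mul_pow]
    field_simp
  rw [e]
  exact mul_le_of_le_one_right (by positivity) h2

lemma F_summable (y : ℝ) (hy : 0 < y) : Summable fun m => F a b L ν p m y :=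
  Summable.of_nonneg_of_le (fun m => F_nonneg ha hb hL hν m y hy) (fun m => F_le ha hb hL hν m y hy)
    (((summ L ν hL hν).mul_left _).mul_right _)

lemma F_tsum_le : ∃ B > 0, ∀ y > 0, ∑' m, F a b L ν p m y ≤ B * y ^ (-2 * p) := by
  have hΓ : ∀ m : ℕ, 0 < Real.Gamma ((m:ℝ) + ν) := fun m => Real.Gamma_pos_of_pos (by positivity)
  have hS := summ L ν hL hν
  have hpos : 0 < ∑' m : ℕ, L ^ m / Real.Gamma ((m:ℝ) + ν) :=
    hS.tsum_pos (fun m => (div_pos (by positivity) (hΓ m)).le) 0 (div_pos (by positivity) (hΓ 0))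
  refine ⟨2 * a * Real.exp (-L) * b ^ ν * ∑' m : ℕ, L ^ m / Real.Gamma ((m:ℝ) + ν),
    by positivity, fun y hy => ?_⟩
  rw [← tsum_mul_left, ← tsum_mul_right]
  exact (F_summable ha hb hL hν y hy).tsum_le_tsum (fun m => F_le ha hb hL hν m y hy)
    ((hS.mul_left _).mul_right _)

lemma F_tsum_ge : ∃ A > 0, ∀ y > 0, y ≤ 2 → A * y ^ (-2 * p) ≤ ∑' m, F a b L ν p m y := by
  have hΓ := Real.Gamma_pos_of_pos hν
  refine ⟨2 * a * Real.exp (-L) * b ^ ν / Real.Gamma ν * Real.exp (-b * 2 ^ (2 * a)),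
    by positivity, fun y hy hy2 => ?_⟩
  refine le_trans ?_ ((F_summable ha hb hL hν y hy).le_tsum 0
    (fun m _ => F_nonneg ha hb hL hν m y hy))
  have h1 : Real.exp (-b * 2 ^ (2 * a)) ≤ Real.exp (-b * y ^ (2 * a)) := by
    rw [neg_mul, neg_mul]; gcongr
  have : F a b L ν p 0 y = 2 * a * Real.exp (-L) * b ^ ν / Real.Gamma ν *
      Real.exp (-b * y ^ (2 * a)) * y ^ (-2 * p) := by
    simp [F]; ring
  rw [this]
  gcongr

include hrel
lemma F_integral (m : ℕ) : ∫ y in Set.Ioi (0:ℝ), F a b L ν p m y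
    = Real.exp (-L) * (L ^ m / (m.factorial : ℝ)) := by
  have hΓ := Real.Gamma_pos_of_pos (show 0 < (m:ℝ) + ν by positivity)
  unfold F
  have hm : 0 ≤ 2 * a * m := by positivity
  have hn : 0 < 2 * a * ν := by positivity
  rw [integral_const_mul, integral_rpow_mul_exp_neg_mul_rpow (by positivity) (by linarith) hb]
  have e : (2 * a * m - 2 * p + 1) / (2 * a) = m + ν := by
    rw [div_eq_iff (by positivity)]; linarith
  rw [neg_div, e, Real.rpow_neg hb.le]
  field_simp

lemma F_total : ∫ y in Set.Ioi (0:ℝ), ∑' m, F a b L ν p m y = 1 := by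
  have hI := F_integral ha hb hL hν hrel
  have hS : HasSum (fun m : ℕ => Real.exp (-L) * (L ^ m / (m.factorial : ℝ))) 1 := by
    have h := (NormedSpace.expSeries_div_hasSum_exp (𝔸 := ℝ) L).mul_left (Real.exp (-L))
    rw [← Real.exp_eq_exp_ℝ, ← Real.exp_add] at h
    simpa using h
  have hint : ∀ m, IntegrableOn (F a b L ν p m) (Set.Ioi 0) := fun m =>
    Integrable.of_integral_ne_zero (by rw [hI]; positivity)
  have h := hasSum_integral_of_summable_integral_norm (F := F a b L ν p) hint (by
    refine hS.summable.congr fun m => ?_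
    rw [← hI]
    refine setIntegral_congr_fun measurableSet_Ioi fun y hy => ?_
    exact (Real.norm_of_nonneg (F_nonneg ha hb hL hν m y hy)).symm)
  simp only [hI] at h
  exact h.unique hS
end

end Aux

theorem stmt_19 (t ξ y0 p : ℝ) (ht : 0 < t) (hξ : 0 < ξ) (hy0 : 0 < y0) (hp : p < 1 / 4)
    (k : ℝ) :
    let η : ℝ := 1 / (2 * (p - 1))
    -- the reflected CEV density (case `p < 1/4`)
    let ζ : ℝ → ℝ := fun z =>
      Real.sqrt y0 * z ^ ((1 : ℝ) / 2 - 2 * p) / ((1 - p) * ξ ^ 2 * t)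
        * Real.exp (-(z ^ (2 * (1 - p)) + y0 ^ (2 * (1 - p))) / (2 * ξ ^ 2 * t * (1 - p) ^ 2))
        * besselI η ((y0 * z) ^ (1 - p) / ((1 - p) ^ 2 * ξ ^ 2 * t))
    -- the call price
    let C : ℝ → ℝ := fun τ => ∫ y in Set.Ioi (0 : ℝ), BS k y τ * ζ y
    ∀ τ₁ : ℝ, ∀ σ : ℝ → ℝ,
      (∀ τ > τ₁, 0 < σ τ ∧ BS k (σ τ ^ 2) τ = C τ) →
      Filter.Tendsto (fun τ => σ τ ^ 2 * τ / (8 * (1 - 2 * p) * Real.log τ))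
        Filter.atTop (nhds 1) := by
  intro η ζ C τ₁ σ hσ
  have ha : 0 < 1 - p := by linarith
  set a := 1 - p with hadef
  have hs : 0 < a ^ 2 * ξ ^ 2 * t := by positivity
  set s := a ^ 2 * ξ ^ 2 * t with hsdef
  have hb : 0 < 1 / (2 * s) := by positivity
  set b := 1 / (2 * s) with hbdef
  have hL : 0 < b * y0 ^ (2 * a) := by positivity
  set L := b * y0 ^ (2 * a) with hLdef
  have hη : a * η = -1 / 2 := by
    simp only [η]
    rw [show p - 1 = -a by rw [hadef]; ring]
    field_simp
  have hν : 0 < η + 1 := by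
    have : 0 < a * (η + 1) := by rw [mul_add, hη, hadef]; linarith
    exact pos_of_mul_pos_right this ha.le
  have hrel : 1 - 2 * p = 2 * a * (η + 1) := by
    have : 2 * a * (η + 1) = 2 * (a * η) + 2 * a := by ring
    rw [this, hη, hadef]; ring
  have hζ : ∀ y > 0, ζ y = ∑' m, Aux.F a b L (η + 1) p m y := by
    intro y hy
    simp only [ζ, besselI]
    rw [← tsum_mul_left]
    refine tsum_congr fun m => ?_
    have hΓ := Real.Gamma_pos_of_pos (show 0 < (m:ℝ) + (η + 1) by positivity)
    unfold Aux.F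
    have e1 : (y0 * y) ^ a / s / 2 = b * (y0 ^ a * y ^ a) := by
      rw [Real.mul_rpow hy0.le hy.le, hbdef]; field_simp
    have e2 : (b * (y0 ^ a * y ^ a)) ^ (2 * (m:ℝ) + η)
        = b ^ (2 * (m:ℝ) + η) * (y0 ^ (a * (2 * m + η)) * y ^ (a * (2 * m + η))) := by
      rw [Real.mul_rpow hb.le (by positivity), Real.mul_rpow (by positivity) (by positivity),
        ← Real.rpow_mul hy0.le, ← Real.rpow_mul hy.le]
    have e3 : a * (2 * m + η) = 2 * a * m + (-1 / 2) := by rw [← hη]; ring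
    have e4 : L ^ m = b ^ m * y0 ^ (2 * a * m) := by
      rw [hLdef, mul_pow, Real.rpow_mul hy0.le (2 * a) m, Real.rpow_natCast]
    have e5 : Real.exp (-(y ^ (2 * a) + y0 ^ (2 * a)) / (2 * ξ ^ 2 * t * a ^ 2))
        = Real.exp (-L) * Real.exp (-b * y ^ (2 * a)) := by
      rw [← Real.exp_add]; congr 1
      rw [hLdef, hbdef, hsdef]; field_simp; ring
    have e6 : y ^ (2 * a * m - 2 * p) = y ^ ((1:ℝ) / 2 - 2 * p) * y ^ (2 * a * m + (-1 / 2)) := by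
      rw [← Real.rpow_add hy]; congr 1; ring
    have e7 : y0 ^ (2 * a * m) = Real.sqrt y0 * y0 ^ (2 * a * m + (-1 / 2)) := by
      rw [Real.sqrt_eq_rpow, ← Real.rpow_add hy0]; congr 1; ring
    have e8 : b ^ ((m:ℝ) + (η + 1)) * b ^ m = b ^ (2 * (m:ℝ) + η) * b := by
      rw [← Real.rpow_natCast, ← Real.rpow_add hb]
      nth_rw 3 [← Real.rpow_one b]
      rw [← Real.rpow_add hb]; congr 1; ring
    have e9 : 1 / (a * ξ ^ 2 * t) = 2 * a * b := by
      rw [hbdef, hsdef]; field_simp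
    rw [e1, e2, e3, e4, e5, e6, e7, add_assoc (m:ℝ) η 1]
    calc _ = (1 / (a * ξ ^ 2 * t)) * (b ^ (2 * (m:ℝ) + η)) * (Real.sqrt y0 * y ^ ((1:ℝ) / 2 - 2 * p)
          * (Real.exp (-L) * Real.exp (-b * y ^ (2 * a)))
          * (y0 ^ (2 * a * m + (-1 / 2)) * y ^ (2 * a * m + (-1 / 2)))
          / (m.factorial * Real.Gamma (m + (η + 1)))) := by ring
      _ = 2 * a * (b ^ (2 * (m:ℝ) + η) * b) * (Real.sqrt y0 * y ^ ((1:ℝ) / 2 - 2 * p)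
          * (Real.exp (-L) * Real.exp (-b * y ^ (2 * a)))
          * (y0 ^ (2 * a * m + (-1 / 2)) * y ^ (2 * a * m + (-1 / 2)))
          / (m.factorial * Real.Gamma (m + (η + 1)))) := by rw [e9]; ring
      _ = _ := by rw [← e8]; ring
  obtain ⟨A, hA, hzA⟩ := Aux.F_tsum_ge (p := p) ha hb hL hν
  obtain ⟨B, hB, hzB⟩ := Aux.F_tsum_le (p := p) ha hb hL hν
  have := Aux.main_abs k (-2 * p) A B (by linarith) ζ hA hB
    (by
      rw [← Aux.F_total ha hb hL hν hrel]
      exact MeasureTheory.setIntegral_congr_fun measurableSet_Ioi fun y hy => hζ y hy)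
    (fun y hy => by
      rw [hζ y hy]; exact tsum_nonneg fun m => Aux.F_nonneg ha hb hL hν m y hy)
    (fun y hy h2 => by rw [hζ y hy]; exact hzA y hy h2)
    (fun y hy => by rw [hζ y hy]; exact hzB y hy) τ₁ σ hσ
  rw [show -2 * p + 1 = 1 - 2 * p by ring] at this
  exact this
end
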